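/- arXiv:2402.12313 — 8 statements merged into one kernel-verified Lean document; each statement's English description precedes it below -/
import Mathlib

section
/- Let G be an X-generated group and let F be an F-inverse monoid equipped with a map ι_F : X → F such that F is generated by ι_F(X) in the enriched signature (the smallest subset of F containing ι_F(X) and 1 and closed under multiplication, inversion and the operation m is all of F). Assume that whenever two words u, v over X ∪ X⁻¹ satisfy [u]_G = [v]_G, the values [u]_F and [v]_F are σ-related in F. Then there exists a monoid homomorphism φ : M^∧(G,Y) → F such that φ((A,g)⁻¹) = φ(A,g)⁻¹ for all (A,g), φ((Γ_ḡ^∧, g)) = m(φ(A,g)) for every (A,g) ∈ M^∧(G,Y), φ((Γ_x^∧, [x]_G)) = ι_F(x) for all x ∈ X, and for every (A,g) ∈ M^∧(G,Y) and every word w over X ∪ X⁻¹ with [w]_G = g, φ(A,g) is σ-related to [w]_F. -/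
namespace FInvPaper

/-- The extended alphabet `Y = X ⊔ Ḡ`, with `Ḡ` a bijective copy of `G`. -/
abbrev YT (X G : Type*) := X ⊕ G

/-- The extension `ι_Y : Y → G` of the assignment map `ι : X → G`. -/
def iotaY {X G : Type*} (ι : X → G) : YT X G → G := Sum.elim ι id

/-- A (candidate) subgraph of `Cay(G,Y)`: a set of vertices together with a set
of positive edges, an edge `(a, y)` joining `a` to `a * ι_Y y`. -/
abbrev Graph (X G : Type*) := Set G × Set (G × YT X G)

variable {X G : Type*} [Group G]

/-- `Γ` is a finite subgraph of `Cay(G,Y)` containing the origin. -/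
def IsSubgraph (ι : X → G) (Γ : Graph X G) : Prop :=
  Γ.1.Finite ∧ Γ.2.Finite ∧ (1 : G) ∈ Γ.1 ∧
    ∀ e ∈ Γ.2, e.1 ∈ Γ.1 ∧ e.1 * iotaY ι e.2 ∈ Γ.1

/-- The relation on vertices given by the positive edges of `Γ`. -/
def edgeRel (ι : X → G) (Γ : Graph X G) (a b : G) : Prop :=
  ∃ y : YT X G, (a, y) ∈ Γ.2 ∧ b = a * iotaY ι y

/-- `Γ` is connected: every vertex is related to the origin `1` by the
equivalence relation generated by the edge relation. -/
def IsConn (ι : X → G) (Γ : Graph X G) : Prop :=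
  ∀ v ∈ Γ.1, Relation.EqvGen (edgeRel ι Γ) 1 v

/-- `𝒳_Y`: all finite connected subgraphs of `Cay(G,Y)` containing the origin. -/
def XY (ι : X → G) : Set (Graph X G) :=
  {Γ | IsSubgraph ι Γ ∧ IsConn ι Γ}

/-- The translate `gΓ`. -/
def gmul (g : G) (Γ : Graph X G) : Graph X G :=
  ((g * ·) '' Γ.1, (fun e => (g * e.1, e.2)) '' Γ.2)

/-- Componentwise union of graphs. -/
def gunion (Γ Δ : Graph X G) : Graph X G := (Γ.1 ∪ Δ.1, Γ.2 ∪ Δ.2)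

/-- Componentwise inclusion of graphs. -/
def gsub (Γ Δ : Graph X G) : Prop := Γ.1 ⊆ Δ.1 ∧ Γ.2 ⊆ Δ.2

/-- The closure `Γ^∧` of `Γ`: add the edge `(a, \overline{a⁻¹b})` for all
vertices `a, b` of `Γ`. -/
def clo (Γ : Graph X G) : Graph X G :=
  (Γ.1, Γ.2 ∪ {e : G × YT X G | ∃ a ∈ Γ.1, ∃ b ∈ Γ.1, e = (a, Sum.inr (a⁻¹ * b))})

/-- `Γ` is closed. -/
def IsClosedGr (Γ : Graph X G) : Prop :=
  ∀ a ∈ Γ.1, ∀ b ∈ Γ.1, (a, (Sum.inr (a⁻¹ * b) : YT X G)) ∈ Γ.2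

/-- `𝒳_Y^∧`: all closed graphs in `𝒳_Y`. -/
def XYw (ι : X → G) : Set (Graph X G) := {Γ | Γ ∈ XY ι ∧ IsClosedGr Γ}

/-- The graph `Γ_1` with single vertex `1` and no edges. -/
def gammaOne : Graph X G := ({1}, ∅)

/-- The graph `Γ_x` for `x ∈ X`. -/
def gammaX (ι : X → G) (x : X) : Graph X G :=
  ({1, ι x}, {((1 : G), (Sum.inl x : YT X G))})

/-- The graph `Γ_ḡ` for `g ∈ G`. -/
def gammaBar (g : G) : Graph X G :=
  ({1, g}, {((1 : G), (Sum.inr g : YT X G))})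

/-- Raw elements: pairs `(Γ, g)`. -/
abbrev Elt (X G : Type*) := Graph X G × G

/-- The carrier of `M(G,Y)`. -/
def Mset (ι : X → G) : Set (Elt X G) := {p | p.1 ∈ XY ι ∧ p.2 ∈ p.1.1}

/-- Multiplication of `M(G,Y)`: `(A,g)(B,h) = (A ∪ gB, gh)`. -/
def mulM (p q : Elt X G) : Elt X G := (gunion p.1 (gmul p.2 q.1), p.2 * q.2)

/-- Inversion: `(A,g)⁻¹ = (g⁻¹A, g⁻¹)`. -/
def invM (p : Elt X G) : Elt X G := (gmul p.2⁻¹ p.1, p.2⁻¹)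

/-- The carrier of `M^∧(G,Y)`. -/
def Mwedge (ι : X → G) : Set (Elt X G) := {p | p.1 ∈ XYw ι ∧ p.2 ∈ p.1.1}

/-- Multiplication of `M^∧(G,Y)`: `(A,g)(B,h) = ((A ∪ gB)^∧, gh)`. -/
def mulW (p q : Elt X G) : Elt X G := (clo (gunion p.1 (gmul p.2 q.1)), p.2 * q.2)

/-- Natural partial order of `M^∧(G,Y)`: `s ≤ t` iff `s = s s⁻¹ t`. -/
def nleW (p q : Elt X G) : Prop := p = mulW (mulW p (invM p)) q

/-- Minimum group congruence `σ` of `M^∧(G,Y)`. -/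
def sigmaW (ι : X → G) (p q : Elt X G) : Prop :=
  ∃ u ∈ Mwedge ι, nleW u p ∧ nleW u q

/-- The `m`-operation of `M^∧(G,Y)`: `m(A, g) = (Γ_ḡ^∧, g)`. -/
def mW (p : Elt X G) : Elt X G := (clo (gammaBar p.2), p.2)

/-- Natural partial order of `M(G,Y)`. -/
def nleM (p q : Elt X G) : Prop := p = mulM (mulM p (invM p)) q

/-- Minimum group congruence `σ` of `M(G,Y)`. -/
def sigmaM (ι : X → G) (p q : Elt X G) : Prop :=
  ∃ u ∈ Mset ι, nleM u p ∧ nleM u q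

end FInvPaper
namespace FInvPaper

/-- An inverse monoid: a monoid with an involutive inversion such that
`s s⁻¹ s = s`, `(st)⁻¹ = t⁻¹ s⁻¹`, and idempotents commute. -/
class InverseMonoid (S : Type*) extends Monoid S, Inv S where
  mul_inv_mul : ∀ s : S, s * s⁻¹ * s = s
  inv_inv : ∀ s : S, s⁻¹⁻¹ = s
  mul_inv_rev : ∀ s t : S, (s * t)⁻¹ = t⁻¹ * s⁻¹
  idem_comm : ∀ e f : S, e * e = e → f * f = f → e * f = f * e

/-- The natural partial order of an inverse monoid: `s ≤ t` iff `s = s s⁻¹ t`. -/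
def nle {S : Type*} [InverseMonoid S] (s t : S) : Prop := s = s * s⁻¹ * t

/-- The minimum group congruence `σ`: `s σ t` iff some `u` lies below both. -/
def sigmaRel {S : Type*} [InverseMonoid S] (s t : S) : Prop :=
  ∃ u : S, nle u s ∧ nle u t

/-- Words over `X ∪ X⁻¹`: lists of signed letters (`true` = positive letter). -/
abbrev Word (X : Type*) := List (X × Bool)

/-- The value of a word under `x ↦ f x`, `x⁻¹ ↦ inv (f x)`;
the empty word has value `1`. -/
def evalWord {X M : Type*} [One M] [Mul M] (f : X → M) (inv : M → M) : Word X → M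
  | [] => 1
  | (x, b) :: w => (if b then f x else inv (f x)) * evalWord f inv w

end FInvPaper

namespace FInvPaper

section InvMon

variable {S : Type*} [InverseMonoid S]

theorem im_mim (s : S) : s * (s⁻¹ * s) = s := by
  rw [← mul_assoc]; exact InverseMonoid.mul_inv_mul s

theorem im_imi (s : S) : s⁻¹ * (s * s⁻¹) = s⁻¹ := by
  have h := im_mim (s⁻¹)
  rwa [InverseMonoid.inv_inv] at h

theorem im_idem_mi (s : S) : (s * s⁻¹) * (s * s⁻¹) = s * s⁻¹ := by
  rw [mul_assoc, im_imi]

theorem im_idem_im (s : S) : (s⁻¹ * s) * (s⁻¹ * s) = s⁻¹ * s := by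
  rw [mul_assoc, im_mim]

theorem im_idem_inv {e : S} (he : e * e = e) : e⁻¹ = e := by
  have h1 : e⁻¹ = (e⁻¹ * e) * (e * e⁻¹) := by
    calc e⁻¹ = e⁻¹ * (e * e⁻¹) := (im_imi e).symm
      _ = e⁻¹ * ((e * e) * e⁻¹) := by rw [he]
      _ = _ := by simp only [mul_assoc]
  rw [InverseMonoid.idem_comm _ _ (im_idem_im e) (im_idem_mi e)] at h1
  calc e⁻¹ = e * e⁻¹ * (e⁻¹ * e) := h1
    _ = e * ((e⁻¹ * e⁻¹) * e) := by simp only [mul_assoc]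
    _ = e * ((e * e)⁻¹ * e) := by rw [InverseMonoid.mul_inv_rev]
    _ = e := by rw [he, im_mim]

theorem im_one_inv : (1 : S)⁻¹ = 1 := im_idem_inv (mul_one 1)

theorem im_idem_mul {e f : S} (he : e * e = e) (hf : f * f = f) :
    (e * f) * (e * f) = e * f := by
  calc (e * f) * (e * f) = e * ((f * e) * f) := by simp only [mul_assoc]
    _ = e * ((e * f) * f) := by rw [InverseMonoid.idem_comm f e hf he]
    _ = (e * e) * (f * f) := by simp only [mul_assoc]
    _ = e * f := by rw [he, hf]

/-- `s e = (s e s⁻¹) s` -/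
theorem im_conj_move (s : S) {e : S} (he : e * e = e) : s * e = (s * e * s⁻¹) * s := by
  calc s * e = (s * (s⁻¹ * s)) * e := by rw [im_mim]
    _ = s * ((s⁻¹ * s) * e) := by rw [mul_assoc]
    _ = s * (e * (s⁻¹ * s)) := by rw [InverseMonoid.idem_comm _ _ (im_idem_im s) he]
    _ = _ := by simp only [mul_assoc]

theorem im_idem_conj (s : S) {e : S} (he : e * e = e) :
    (s * e * s⁻¹) * (s * e * s⁻¹) = s * e * s⁻¹ := by
  calc (s * e * s⁻¹) * (s * e * s⁻¹) = ((s * e * s⁻¹) * s) * (e * s⁻¹) := by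
        simp only [mul_assoc]
    _ = (s * e) * (e * s⁻¹) := by rw [← im_conj_move s he]
    _ = s * (e * e) * s⁻¹ := by simp only [mul_assoc]
    _ = _ := by rw [he]

theorem nle_iff {s t : S} : nle s t ↔ ∃ e : S, e * e = e ∧ s = e * t := by
  constructor
  · intro h
    exact ⟨s * s⁻¹, im_idem_mi s, h⟩
  · rintro ⟨e, he, rfl⟩
    unfold nle
    rw [InverseMonoid.mul_inv_rev, im_idem_inv he]
    symm
    calc e * t * (t⁻¹ * e) * t = e * ((t * t⁻¹) * e) * t := by simp only [mul_assoc]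
      _ = e * (e * (t * t⁻¹)) * t := by
          rw [InverseMonoid.idem_comm _ _ (im_idem_mi t) he]
      _ = (e * e) * (t * (t⁻¹ * t)) := by simp only [mul_assoc]
      _ = e * t := by rw [he, im_mim]

theorem nle_refl (s : S) : nle s s := nle_iff.2 ⟨1, mul_one 1, (one_mul s).symm⟩

theorem nle_trans {s t u : S} (h : nle s t) (k : nle t u) : nle s u := by
  obtain ⟨e, he, rfl⟩ := nle_iff.1 h
  obtain ⟨f, hf, rfl⟩ := nle_iff.1 k
  exact nle_iff.2 ⟨e * f, im_idem_mul he hf, (mul_assoc _ _ _).symm⟩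

theorem nle_antisymm {s t : S} (h : nle s t) (k : nle t s) : s = t := by
  obtain ⟨e, he, hs⟩ := nle_iff.1 h
  obtain ⟨f, hf, ht⟩ := nle_iff.1 k
  have hft : f * t = t := by
    calc f * t = f * (f * s) := by rw [← ht]
      _ = (f * f) * s := by rw [mul_assoc]
      _ = t := by rw [hf, ← ht]
  symm
  calc t = f * s := ht
    _ = f * (e * t) := by rw [← hs]
    _ = (f * e) * t := by rw [mul_assoc]
    _ = (e * f) * t := by rw [InverseMonoid.idem_comm _ _ hf he]
    _ = e * (f * t) := by rw [mul_assoc]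
    _ = s := by rw [hft, ← hs]

theorem nle_mul {s s' t t' : S} (h : nle s s') (k : nle t t') : nle (s * t) (s' * t') := by
  obtain ⟨e, he, rfl⟩ := nle_iff.1 h
  obtain ⟨f, hf, rfl⟩ := nle_iff.1 k
  refine nle_iff.2 ⟨e * (s' * f * s'⁻¹), im_idem_mul he (im_idem_conj s' hf), ?_⟩
  calc e * s' * (f * t') = e * ((s' * f) * t') := by simp only [mul_assoc]
    _ = e * (((s' * f * s'⁻¹) * s') * t') := by rw [← im_conj_move s' hf]
    _ = _ := by simp only [mul_assoc]

theorem nle_inv {s t : S} (h : nle s t) : nle s⁻¹ t⁻¹ := by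
  obtain ⟨e, he, rfl⟩ := nle_iff.1 h
  refine nle_iff.2 ⟨t⁻¹ * e * t⁻¹⁻¹, im_idem_conj _ he, ?_⟩
  rw [InverseMonoid.mul_inv_rev, im_idem_inv he]
  exact im_conj_move _ he

theorem nle_idem_mul {e : S} (he : e * e = e) (s : S) : nle (e * s) s :=
  nle_iff.2 ⟨e, he, rfl⟩

theorem sig_refl (s : S) : sigmaRel s s := ⟨s, nle_refl s, nle_refl s⟩

theorem sig_symm {s t : S} (h : sigmaRel s t) : sigmaRel t s := by
  obtain ⟨u, a, b⟩ := h
  exact ⟨u, b, a⟩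

theorem sig_of_nle {s t : S} (h : nle s t) : sigmaRel s t := ⟨s, nle_refl s, h⟩

theorem sig_trans {s t r : S} (h : sigmaRel s t) (k : sigmaRel t r) : sigmaRel s r := by
  obtain ⟨u, hu, hut⟩ := h
  obtain ⟨v, hvt, hv⟩ := k
  obtain ⟨e, he, h1⟩ := nle_iff.1 hut
  obtain ⟨f, hf, h2⟩ := nle_iff.1 hvt
  refine ⟨e * v, nle_trans ?_ hu, nle_trans (nle_idem_mul he v) hv⟩
  refine nle_iff.2 ⟨f, hf, ?_⟩
  rw [h1, h2, ← mul_assoc, ← mul_assoc, InverseMonoid.idem_comm _ _ he hf]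

theorem sig_mul {s s' t t' : S} (h : sigmaRel s s') (k : sigmaRel t t') :
    sigmaRel (s * t) (s' * t') := by
  obtain ⟨u, a, b⟩ := h
  obtain ⟨v, c, d⟩ := k
  exact ⟨u * v, nle_mul a c, nle_mul b d⟩

theorem sig_inv {s t : S} (h : sigmaRel s t) : sigmaRel s⁻¹ t⁻¹ := by
  obtain ⟨u, a, b⟩ := h
  exact ⟨u⁻¹, nle_inv a, nle_inv b⟩

/-- The idempotents of an inverse monoid. -/
abbrev Idm (S : Type*) [InverseMonoid S] := {e : S // e * e = e}

instance idmMin : Min (Idm S) := ⟨fun e f => ⟨e.1 * f.1, im_idem_mul e.2 f.2⟩⟩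

instance idmSemilattice : SemilatticeInf (Idm S) :=
  SemilatticeInf.mk'
    (fun a b => Subtype.ext (InverseMonoid.idem_comm _ _ a.2 b.2))
    (fun a b c => Subtype.ext (mul_assoc _ _ _))
    (fun a => Subtype.ext a.2)

theorem idm_inf_val (a b : Idm S) : (a ⊓ b).1 = a.1 * b.1 := rfl

instance idmTop : OrderTop (Idm S) where
  top := ⟨1, mul_one 1⟩
  le_top a := by
    rw [← inf_eq_left]
    exact Subtype.ext (mul_one _)

theorem idm_top_val : (⊤ : Idm S).1 = 1 := rfl

open Classical in
/-- The meet of the idempotents `f i`, `i ∈ T`, when `T` is finite. -/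
noncomputable def setInf {I : Type*} (f : I → Idm S) (T : Set I) : Idm S :=
  if h : T.Finite then h.toFinset.inf f else ⊤

open Classical in
theorem setInf_coe {I : Type*} (f : I → Idm S) (T : Finset I) :
    setInf f (T : Set I) = T.inf f := by
  unfold setInf
  rw [dif_pos T.finite_toSet]
  simp

open Classical in
theorem setInf_union {I : Type*} (f : I → Idm S) {T U : Set I} (hT : T.Finite)
    (hU : U.Finite) : setInf f (T ∪ U) = setInf f T ⊓ setInf f U := by
  lift T to Finset I using hT
  lift U to Finset I using hU
  rw [← Finset.coe_union]
  simp only [setInf_coe]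
  exact Finset.inf_union

theorem setInf_absorb {I : Type*} (f : I → Idm S) {T : Set I} (hT : T.Finite) {i : I}
    (hi : i ∈ T) : (setInf f T).1 * (f i).1 = (setInf f T).1 := by
  lift T to Finset I using hT
  rw [setInf_coe, ← idm_inf_val, inf_eq_left.2 (Finset.inf_le (by exact_mod_cast hi))]

open Classical in
theorem setInf_move {I : Type*} (f : I → Idm S) (s : S) (t : I → I)
    (h : ∀ i, s * (f i).1 = (f (t i)).1 * s) {T : Set I} (hT : T.Finite) :
    s * (setInf f T).1 = (setInf f (t '' T)).1 * s := by
  lift T to Finset I using hT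
  rw [← Finset.coe_image]
  simp only [setInf_coe]
  induction T using Finset.induction_on with
  | empty => simp [idm_top_val]
  | insert a T ha ih =>
    rw [Finset.image_insert, Finset.inf_insert, Finset.inf_insert, idm_inf_val, idm_inf_val,
      ← mul_assoc, h, mul_assoc, ih, mul_assoc]

end InvMon

section Words

variable {X : Type*}

theorem evalWord_append {N : Type*} [Monoid N] (f : X → N) (i : N → N) (u v : Word X) :
    evalWord f i (u ++ v) = evalWord f i u * evalWord f i v := by
  induction u with
  | nil => simp [evalWord]
  | cons a u ih => obtain ⟨x, b⟩ := a; simp [evalWord, ih, mul_assoc]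

/-- The formal inverse of a word. -/
def winv : Word X → Word X
  | [] => []
  | (x, b) :: w => winv w ++ [(x, !b)]

theorem evalWord_winv {N : Type*} [Monoid N] (f : X → N) (i : N → N)
    (h1 : i 1 = 1) (hi : ∀ a, i (i a) = a) (hm : ∀ a b, i (a * b) = i b * i a) (u : Word X) :
    evalWord f i (winv u) = i (evalWord f i u) := by
  induction u with
  | nil => simp [evalWord, winv, h1]
  | cons a u ih =>
    obtain ⟨x, b⟩ := a
    cases b <;> simp [evalWord, winv, evalWord_append, ih, hm, hi]

theorem evalWord_surj {G : Type*} [Group G] (ι : X → G)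
    (hgen : Subgroup.closure (Set.range ι) = ⊤) (g : G) :
    ∃ w : Word X, evalWord ι (fun a => a⁻¹) w = g := by
  have hg : g ∈ Subgroup.closure (Set.range ι) := by rw [hgen]; trivial
  induction hg using Subgroup.closure_induction with
  | mem y hy =>
    obtain ⟨x, rfl⟩ := hy
    exact ⟨[(x, true)], by simp [evalWord]⟩
  | one => exact ⟨[], rfl⟩
  | mul a b _ _ iha ihb =>
    obtain ⟨u, rfl⟩ := iha
    obtain ⟨v, rfl⟩ := ihb
    exact ⟨u ++ v, evalWord_append _ _ _ _⟩
  | inv a _ ih =>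
    obtain ⟨u, rfl⟩ := ih
    exact ⟨winv u, evalWord_winv _ _ (by simp) (by simp) (by simp) u⟩

end Words

section Construction

variable {X G F : Type*} [Group G] [InverseMonoid F]

/-- The idempotent attached to a vertex `(a, none)` or an edge `(a, some x)`. -/
def cellIdm (M : G → F) (ιF : X → F) (c : G × Option X) : Idm F :=
  ⟨M c.1 * (c.2.elim 1 (fun x => ιF x * (ιF x)⁻¹)) * (M c.1)⁻¹, by
    apply im_idem_conj
    rcases c.2 with _ | x
    · simp
    · exact im_idem_mi _⟩

/-- Vertices and `X`-edges of a graph. -/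
def cells (A : Graph X G) : Set (G × Option X) :=
  {c | (c.2 = none ∧ c.1 ∈ A.1) ∨ ∃ x, c.2 = some x ∧ (c.1, Sum.inl x) ∈ A.2}

theorem cells_clo (A : Graph X G) : cells (clo A) = cells A := by
  ext ⟨a, o⟩
  simp [cells, clo]

theorem cells_union (A B : Graph X G) : cells (gunion A B) = cells A ∪ cells B := by
  ext ⟨a, o⟩
  rcases o with _ | x <;> simp [cells, gunion]

theorem cells_gmul (g : G) (A : Graph X G) :
    cells (gmul g A) = (fun c => (g * c.1, c.2)) '' cells A := by
  ext ⟨a, o⟩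
  rcases o with _ | x 
  · simp only [cells, gmul, Set.mem_setOf_eq, Set.mem_image]
    constructor
    · rintro (⟨-, b, hb, rfl⟩ | ⟨x, h, -⟩)
      · exact ⟨(b, none), Or.inl ⟨rfl, hb⟩, rfl⟩
      · cases h
    · rintro ⟨⟨b, o⟩, (⟨-, hb⟩ | ⟨x, rfl, -⟩), h⟩
      · exact Or.inl ⟨trivial, b, hb, congrArg Prod.fst h⟩
      · cases congrArg Prod.snd h
  · simp [cells, gmul]

theorem cells_finite {A : Graph X G} (h1 : A.1.Finite) (h2 : A.2.Finite) :
    (cells A).Finite := by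
  refine ((h1.image (fun a => (a, (none : Option X)))).union
    (h2.image (fun e => (e.1, e.2.elim some (fun _ => none))))).subset ?_
  rintro ⟨a, o⟩ (⟨rfl, h⟩ | ⟨x, rfl, h⟩)
  · exact Or.inl ⟨a, h, rfl⟩
  · exact Or.inr ⟨_, h, rfl⟩

/-- The homomorphism. -/
noncomputable def phi (M : G → F) (ιF : X → F) (p : Elt X G) : F :=
  (setInf (cellIdm M ιF) (cells p.1)).1 * M p.2

variable {M : G → F} {ιF : X → F}

theorem M_mul (hmul : ∀ g h, nle (M g * M h) (M (g * h)))
    (hinv : ∀ g, M g⁻¹ = (M g)⁻¹) (g h : G) : M g * M h = M g * (M g)⁻¹ * M (g * h) := by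
  apply nle_antisymm
  · have h1 := nle_mul (nle_refl (M g * (M g)⁻¹)) (hmul g h)
    have h2 : M g * (M g)⁻¹ * (M g * M h) = M g * M h := by
      rw [← mul_assoc, InverseMonoid.mul_inv_mul]
    rwa [h2] at h1
  · have h1 := hmul g⁻¹ (g * h)
    rw [hinv, inv_mul_cancel_left] at h1
    have h2 := nle_mul (nle_refl (M g)) h1
    rwa [← mul_assoc] at h2

theorem cell_move (hmul : ∀ g h, nle (M g * M h) (M (g * h)))
    (hinv : ∀ g, M g⁻¹ = (M g)⁻¹) (g : G) (c : G × Option X) :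
    M g * (cellIdm M ιF c).1 = (cellIdm M ιF (g * c.1, c.2)).1 * M g := by
  have hc := (cellIdm M ιF c).2
  have hd := (cellIdm M ιF (g * c.1, c.2)).2
  rw [im_conj_move (M g) hc]
  simp only [cellIdm] at hd ⊢
  generalize (c.2.elim 1 (fun x => ιF x * (ιF x)⁻¹)) = q at hd ⊢
  have hk := im_idem_mi (M g)
  generalize hkk : M g * (M g)⁻¹ = k at hk
  have hM : M g * M c.1 = k * M (g * c.1) := by rw [← hkk]; exact M_mul hmul hinv g c.1
  have hMi : (M c.1)⁻¹ * (M g)⁻¹ = (M (g * c.1))⁻¹ * k := by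
    rw [← InverseMonoid.mul_inv_rev, hM, InverseMonoid.mul_inv_rev, im_idem_inv hk]
  have hkg : k * M g = M g := by rw [← hkk, InverseMonoid.mul_inv_mul]
  generalize hdd : M (g * c.1) * q * (M (g * c.1))⁻¹ = d at hd ⊢
  calc M g * (M c.1 * q * (M c.1)⁻¹) * (M g)⁻¹ * M g
      = (M g * M c.1) * q * ((M c.1)⁻¹ * (M g)⁻¹) * M g := by simp only [mul_assoc]
    _ = k * M (g * c.1) * q * ((M (g * c.1))⁻¹ * k) * M g := by rw [hM, hMi]
    _ = k * (M (g * c.1) * q * (M (g * c.1))⁻¹) * (k * M g) := by simp only [mul_assoc]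
    _ = (k * d) * M g := by rw [hdd, hkg]
    _ = (d * k) * M g := by rw [InverseMonoid.idem_comm _ _ hk hd]
    _ = d * M g := by rw [mul_assoc, hkg]

theorem vert_absorb {A : Graph X G} (h1 : A.1.Finite) (h2 : A.2.Finite) {g : G}
    (hg : g ∈ A.1) : (setInf (cellIdm M ιF) (cells A)).1 * (M g * (M g)⁻¹)
      = (setInf (cellIdm M ιF) (cells A)).1 := by
  have h := setInf_absorb (cellIdm M ιF) (cells_finite h1 h2) (i := (g, none))
    (Or.inl ⟨rfl, hg⟩)
  simpa [cellIdm] using h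

theorem phi_mul (hmul : ∀ g h, nle (M g * M h) (M (g * h)))
    (hinv : ∀ g, M g⁻¹ = (M g)⁻¹) {p q : Elt X G}
    (hp1 : p.1.1.Finite) (hp2 : p.1.2.Finite) (hp : p.2 ∈ p.1.1)
    (hq1 : q.1.1.Finite) (hq2 : q.1.2.Finite) :
    phi M ιF (mulW p q) = phi M ιF p * phi M ιF q := by
  unfold phi mulW
  simp only [cells_clo, cells_union, cells_gmul]
  rw [setInf_union _ (cells_finite hp1 hp2) ((cells_finite hq1 hq2).image _), idm_inf_val]
  have hmv := setInf_move (cellIdm M ιF) (M p.2) (fun c => (p.2 * c.1, c.2))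
    (cell_move hmul hinv p.2) (cells_finite hq1 hq2)
  have hab := vert_absorb (M := M) (ιF := ιF) hp1 hp2 hp
  generalize hea : setInf (cellIdm M ιF) (cells p.1) = a at *
  generalize heb : setInf (cellIdm M ιF) ((fun c => (p.2 * c.1, c.2)) '' cells q.1) = b at *
  symm
  calc a.1 * M p.2 * ((setInf (cellIdm M ιF) (cells q.1)).1 * M q.2)
      = a.1 * (M p.2 * (setInf (cellIdm M ιF) (cells q.1)).1) * M q.2 := by
        simp only [mul_assoc]
    _ = (a.1 * b.1) * (M p.2 * M q.2) := by rw [hmv]; simp only [mul_assoc]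
    _ = (b.1 * a.1) * (M p.2 * (M p.2)⁻¹ * M (p.2 * q.2)) := by
        rw [M_mul hmul hinv, InverseMonoid.idem_comm _ _ a.2 b.2]
    _ = b.1 * (a.1 * (M p.2 * (M p.2)⁻¹)) * M (p.2 * q.2) := by simp only [mul_assoc]
    _ = _ := by rw [hab, InverseMonoid.idem_comm _ _ b.2 a.2]

theorem phi_inv (hmul : ∀ g h, nle (M g * M h) (M (g * h)))
    (hinv : ∀ g, M g⁻¹ = (M g)⁻¹) {p : Elt X G}
    (hp1 : p.1.1.Finite) (hp2 : p.1.2.Finite) :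
    phi M ιF (invM p) = (phi M ιF p)⁻¹ := by
  unfold phi invM
  simp only [cells_gmul]
  rw [InverseMonoid.mul_inv_rev, im_idem_inv (setInf _ _).2, ← hinv]
  exact (setInf_move (cellIdm M ιF) (M p.2⁻¹) (fun c => (p.2⁻¹ * c.1, c.2))
    (cell_move hmul hinv p.2⁻¹) (cells_finite hp1 hp2)).symm

theorem cells_one : cells (gammaOne : Graph X G) = (({(1, none)} : Finset (G × Option X)) : Set _) := by
  ext ⟨a, o⟩
  rcases o with _ | x <;> simp [cells, gammaOne]

open Classical in
theorem cells_bar (g : G) : cells (gammaBar g : Graph X G)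
    = (({(1, none), (g, none)} : Finset (G × Option X)) : Set _) := by
  ext ⟨a, o⟩
  rcases o with _ | x <;> simp [cells, gammaBar]

open Classical in
theorem cells_X (ι : X → G) (x : X) : cells (gammaX ι x)
    = (({(1, some x), (1, none), (ι x, none)} : Finset (G × Option X)) : Set _) := by
  ext ⟨a, o⟩
  rcases o with _ | y <;> simp [cells, gammaX, and_comm]

end Construction

end FInvPaper

namespace FInvPaper

/-- Theorem 4.5, universal property of `M^∧(G,Y)`.  Let `G`
be an `X`-generated group and `F` an `F`-inverse monoid (with `m`-operation
`m`) equipped with `ι_F : X → F` generating `F` in the enriched signature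
`(·, ⁻¹, m, 1)`.  Assume that words over `X ∪ X⁻¹` with equal values in `G`
have `σ`-related values in `F`.  Then there is a monoid homomorphism
`φ : M^∧(G,Y) → F` preserving inversion, intertwining the `m`-operations,
sending the generator `(Γ_x^∧, [x])` to `ι_F x`, and such that `φ(A,g)` is
`σ`-related to the value in `F` of any word over `X ∪ X⁻¹` whose value in `G`
is `g`. -/
theorem universal_property_Mwedge {X G F : Type*} [Nonempty X] [Group G]
    [InverseMonoid F] (ι : X → G)
    (hgen : Subgroup.closure (Set.range ι) = ⊤)
    (m : F → F)
    -- `F` is `F`-inverse with `m s` the maximum of the `σ`-class of `s`: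
    (hm_sigma : ∀ s : F, sigmaRel s (m s))
    (hm_max : ∀ s t : F, sigmaRel s t → nle t (m s))
    (ιF : X → F)
    -- `F` is generated by `ι_F(X)` in the enriched signature:
    (hFgen : ∀ P : Set F, (1 : F) ∈ P → (∀ x : X, ιF x ∈ P) →
      (∀ a b : F, a ∈ P → b ∈ P → a * b ∈ P) →
      (∀ a : F, a ∈ P → a⁻¹ ∈ P) →
      (∀ a : F, a ∈ P → m a ∈ P) → ∀ f : F, f ∈ P)
    -- words with equal values in `G` have `σ`-related values in `F`:
    (hcompat : ∀ u v : Word X,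
      evalWord ι (fun a => a⁻¹) u = evalWord ι (fun a => a⁻¹) v →
      sigmaRel (evalWord ιF (fun s => s⁻¹) u) (evalWord ιF (fun s => s⁻¹) v)) :
    ∃ φ : Elt X G → F,
      -- `φ` is a monoid homomorphism on `M^∧(G,Y)`
      φ ((clo gammaOne, 1) : Elt X G) = 1 ∧
      (∀ p q : Elt X G, p ∈ Mwedge ι → q ∈ Mwedge ι →
        φ (mulW p q) = φ p * φ q) ∧
      -- `φ` preserves inversion
      (∀ p : Elt X G, p ∈ Mwedge ι → φ (invM p) = (φ p)⁻¹) ∧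
      -- `φ` intertwines the `m`-operations: `φ(Γ_ḡ^∧, g) = m(φ(A,g))`
      (∀ p : Elt X G, p ∈ Mwedge ι → φ (mW p) = m (φ p)) ∧
      -- `φ` sends the generator `(Γ_x^∧, [x])` to `ι_F x`
      (∀ x : X, φ ((clo (gammaX ι x), ι x) : Elt X G) = ιF x) ∧
      -- `φ(A,g)` is `σ`-related to `[w]_F` whenever `[w]_G = g`
      (∀ p : Elt X G, p ∈ Mwedge ι → ∀ w : Word X,
        evalWord ι (fun a => a⁻¹) w = p.2 →
        sigmaRel (φ p) (evalWord ιF (fun s => s⁻¹) w)) := by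

  classical
  choose wd hwd using evalWord_surj ι hgen
  have m_eq : ∀ s t : F, sigmaRel s t → m s = m t := by
    intro s t h
    apply nle_antisymm
    · exact hm_max _ _ (sig_trans (sig_symm h) (hm_sigma s))
    · exact hm_max _ _ (sig_trans h (hm_sigma t))
  let ev : Word X → F := evalWord ιF (fun s => s⁻¹)
  let M : G → F := fun g => m (ev (wd g))
  -- `M g` is the maximum of the class of any word with value `g`
  have hMw : ∀ w : Word X, M (evalWord ι (fun a => a⁻¹) w) = m (ev w) := fun w =>
    m_eq _ _ (hcompat _ _ (hwd _))
  have hMsig : ∀ w : Word X, sigmaRel (ev w) (M (evalWord ι (fun a => a⁻¹) w)) := by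
    intro w; rw [hMw]; exact hm_sigma _
  have hMmax : ∀ (w : Word X) (s : F), sigmaRel (ev w) s →
      nle s (M (evalWord ι (fun a => a⁻¹) w)) := by
    intro w s h; rw [hMw]; exact hm_max _ _ h
  have hM1 : M 1 = 1 := by
    have h : nle 1 (M 1) := hMmax [] 1 (sig_refl _)
    unfold nle at h
    rw [im_one_inv, one_mul, one_mul] at h
    exact h.symm
  have hmul : ∀ g h, nle (M g * M h) (M (g * h)) := by
    intro g h
    have := hMmax (wd g ++ wd h) (M g * M h) (by
      change sigmaRel (evalWord _ _ _) _
      rw [evalWord_append]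
      exact sig_mul (hm_sigma _) (hm_sigma _))
    rwa [evalWord_append, hwd, hwd] at this
  have hinvle : ∀ g, nle (M g)⁻¹ (M g⁻¹) := by
    intro g
    have := hMmax (winv (wd g)) (M g)⁻¹ (by
      change sigmaRel (evalWord _ _ _) _
      rw [evalWord_winv _ _ im_one_inv InverseMonoid.inv_inv InverseMonoid.mul_inv_rev]
      exact sig_inv (hm_sigma _))
    rwa [evalWord_winv _ _ (by simp) (by simp) (by simp), hwd] at this
  have hinv : ∀ g, M g⁻¹ = (M g)⁻¹ := by
    intro g
    apply nle_antisymm _ (hinvle g)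
    have := nle_inv (hinvle g⁻¹)
    rwa [InverseMonoid.inv_inv, _root_.inv_inv] at this
  have hphile : ∀ p : Elt X G, sigmaRel (phi M ιF p) (M p.2) := fun p =>
    sig_of_nle (nle_idem_mul (setInf _ _).2 _)
  refine ⟨phi M ιF, ?_, ?_, ?_, ?_, ?_, ?_⟩
  · unfold phi
    simp only [cells_clo, cells_one]
    rw [setInf_coe]
    simp [cellIdm, hM1, im_one_inv]
  · intro p q hp hq
    exact phi_mul hmul hinv hp.1.1.1.1 hp.1.1.1.2.1 hp.2 hq.1.1.1.1 hq.1.1.1.2.1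
  · intro p hp
    exact phi_inv hmul hinv hp.1.1.1.1 hp.1.1.1.2.1
  · intro p hp
    have h1 : phi M ιF (mW p) = M p.2 := by
      unfold phi mW
      simp only [cells_clo, cells_bar]
      rw [setInf_coe, Finset.inf_insert, Finset.inf_singleton, idm_inf_val]
      simp [cellIdm, hM1, im_one_inv, InverseMonoid.mul_inv_mul]
    rw [h1]
    exact m_eq _ _ (sig_trans (hm_sigma _) (sig_symm (hphile p)))
  · intro x
    have hx : nle (ιF x) (M (ι x)) := by
      have := hMmax [(x, true)] (ιF x) (by
        change sigmaRel (evalWord _ _ _) _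
        simp only [evalWord, if_true, mul_one]
        exact sig_refl _)
      simpa [evalWord] using this
    unfold phi
    simp only [cells_clo, cells_X]
    rw [setInf_coe, Finset.inf_insert, Finset.inf_insert, Finset.inf_singleton, idm_inf_val,
      idm_inf_val]
    simp only [cellIdm, hM1, im_one_inv, Option.elim, mul_one, one_mul]
    rw [mul_assoc, InverseMonoid.mul_inv_mul]
    exact hx.symm
  · intro p hp w hw
    have := hMsig w
    rw [hw] at this
    exact sig_trans (hphile p) (sig_symm this)

end FInvPaper
end

section
/- For every g ∈ G and every representation g = ι(x₁)^{ε₁} ⋯ ι(x_n)^{ε_n} with n ≥ 1, x_i ∈ X and ε_i ∈ {1,−1}, one has (Γ_ḡ^∧, g) = m((Γ_{x₁}^∧, [x₁]_G)^{ε₁} ⋯ (Γ_{x_n}^∧, [x_n]_G)^{ε₁}) in M^∧(G,Y), where m(A,g) := (Γ_ḡ^∧, g). Consequently, M^∧(G,Y) is X-generated in the enriched signature: the smallest subset of M^∧(G,Y) containing the identity and all elements (Γ_x^∧, [x]_G) for x ∈ X, and closed under multiplication, inversion and the operation m, is all of M^∧(G,Y). -/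
namespace FInvPaper

variable {X G : Type*} [Group G]

/-- The generator `(Γ_x^∧, [x])` of `M^∧(G,Y)`. -/
def genW (ι : X → G) (x : X) : Elt X G := (clo (gammaX ι x), ι x)

/-- The value in `M^∧(G,Y)` of a word over `X ∪ X⁻¹`:
`x ↦ (Γ_x^∧, [x])`, `x⁻¹ ↦ (Γ_x^∧, [x])⁻¹`, empty word `↦` identity. -/
def evalWordW (ι : X → G) : Word X → Elt X G
  | [] => (clo gammaOne, 1)
  | (x, b) :: w => mulW (if b then genW ι x else invM (genW ι x)) (evalWordW ι w)

theorem evalWordW_snd (ι : X → G) (w : Word X) :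
    (evalWordW ι w).2 = evalWord ι (fun a => a⁻¹) w := by
  induction w with
  | nil => rfl
  | cons a w ih =>
    obtain ⟨x, b⟩ := a
    cases b <;> simp [evalWordW, evalWord, mulW, invM, genW, ih]

theorem gmul_clo (g : G) (Γ : Graph X G) : gmul g (clo Γ) = clo (gmul g Γ) := by
  refine Prod.ext rfl ?_
  ext ⟨a, y⟩
  simp only [gmul, clo, Set.image_union, Set.mem_union]
  refine or_congr Iff.rfl ?_
  constructor
  · rintro ⟨_, ⟨c, hc, d, hd, rfl⟩, h⟩
    exact ⟨g * c, ⟨c, hc, rfl⟩, g * d, ⟨d, hd, rfl⟩, by rw [← h]; simp [mul_assoc]⟩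
  · rintro ⟨_, ⟨c, hc, rfl⟩, _, ⟨d, hd, rfl⟩, h⟩
    exact ⟨(c, Sum.inr (c⁻¹ * d)), ⟨c, hc, d, hd, rfl⟩, by rw [h]; simp [mul_assoc]⟩

theorem clo_union_clo (Γ Δ : Graph X G) :
    clo (gunion (clo Γ) (clo Δ)) = clo (gunion Γ Δ) := by
  refine Prod.ext rfl ?_
  ext e
  simp only [gunion, clo, Set.mem_union, Set.mem_ofPred_eq]
  constructor
  · rintro (((h | ⟨a, ha, b, hb, h⟩) | (h | ⟨a, ha, b, hb, h⟩)) | h)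
    · exact Or.inl (Or.inl h)
    · exact Or.inr ⟨a, Or.inl ha, b, Or.inl hb, h⟩
    · exact Or.inl (Or.inr h)
    · exact Or.inr ⟨a, Or.inr ha, b, Or.inr hb, h⟩
    · exact Or.inr h
  · rintro ((h | h) | h)
    · exact Or.inl (Or.inl (Or.inl h))
    · exact Or.inl (Or.inr (Or.inl h))
    · exact Or.inr h

theorem mulW_clo (Γ Δ : Graph X G) (g h : G) :
    mulW (clo Γ, g) (clo Δ, h) = (clo (gunion Γ (gmul g Δ)), g * h) := by
  simp only [mulW, gmul_clo, clo_union_clo]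

theorem clo_gammaBar (g : G) : clo (gammaBar g : Graph X G) = clo ({1, g}, ∅) := by
  refine Prod.ext rfl ?_
  ext e
  simp only [gammaBar, clo, Set.mem_union, Set.mem_ofPred_eq, Set.mem_singleton_iff,
    Set.mem_empty_iff_false, false_or, or_iff_right_iff_imp]
  rintro rfl
  exact ⟨1, by simp, g, by simp, by simp⟩

theorem closed_eq (ι : X → G) (Γ : Graph X G) (h1 : IsSubgraph ι Γ) (h2 : IsClosedGr Γ) :
    Γ = clo (Γ.1, {e ∈ Γ.2 | ∃ x, e.2 = Sum.inl x}) := by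
  refine Prod.ext rfl ?_
  ext ⟨a, y⟩
  simp only [clo, Set.mem_union, Set.mem_ofPred_eq]
  constructor
  · intro h
    rcases y with x | k
    · exact Or.inl ⟨h, x, rfl⟩
    · have := h1.2.2.2 _ h
      refine Or.inr ⟨a, this.1, a * k, this.2, by simp⟩
  · rintro (h | ⟨c, hc, d, hd, h⟩)
    · exact h.1
    · rw [h]; exact h2 c hc d hd

/-- For every `g ∈ G` and every representation
`g = ι(x₁)^{ε₁} ⋯ ι(x_n)^{ε_n}` (`n ≥ 1`) one has
`(Γ_ḡ^∧, g) = m((Γ_{x₁}^∧,[x₁])^{ε₁} ⋯ (Γ_{x_n}^∧,[x_n])^{ε_n})` in `M^∧(G,Y)`,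
where `m(A,g) = (Γ_ḡ^∧, g)`.  Consequently `M^∧(G,Y)` is `X`-generated in the
enriched signature `(·, ⁻¹, m, 1)`: the smallest subset of `M^∧(G,Y)`
containing the identity and the generators `(Γ_x^∧, [x])` and closed under
multiplication, inversion and `m` is all of `M^∧(G,Y)`. -/
theorem Mwedge_X_generated {X G : Type*} [Nonempty X] [Group G] (ι : X → G)
    (hgen : Subgroup.closure (Set.range ι) = ⊤) :
    (∀ (g : G) (w : Word X), w ≠ [] → evalWord ι (fun a => a⁻¹) w = g →
      ((clo (gammaBar g), g) : Elt X G) = mW (evalWordW ι w)) ∧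
    (∀ P : Set (Elt X G), P ⊆ Mwedge ι →
      ((clo gammaOne, 1) : Elt X G) ∈ P →
      (∀ x : X, genW ι x ∈ P) →
      (∀ p q : Elt X G, p ∈ P → q ∈ P → mulW p q ∈ P) →
      (∀ p : Elt X G, p ∈ P → invM p ∈ P) →
      (∀ p : Elt X G, p ∈ P → mW p ∈ P) →
      ∀ p ∈ Mwedge ι, p ∈ P) := by
  refine ⟨?_, ?_⟩
  · intro g w _ h
    simp only [mW, evalWordW_snd, h]
  intro P _ hone hX hmul hinv hm p hp
  have hK : ∀ v : G, ((clo ({1, v}, ∅), v) : Elt X G) ∈ P := by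
    intro v
    have : ∃ q ∈ P, q.2 = v := by
      have hv : v ∈ Subgroup.closure (Set.range ι) := by rw [hgen]; trivial
      induction hv using Subgroup.closure_induction with
      | mem x hx =>
        obtain ⟨y, rfl⟩ := hx
        exact ⟨_, hX y, rfl⟩
      | one => exact ⟨_, hone, rfl⟩
      | mul x y _ _ hx hy =>
        obtain ⟨q, hq, rfl⟩ := hx
        obtain ⟨r, hr, rfl⟩ := hy
        exact ⟨_, hmul q r hq hr, rfl⟩
      | inv x _ hx =>
        obtain ⟨q, hq, rfl⟩ := hx
        exact ⟨_, hinv q hq, rfl⟩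
    obtain ⟨q, hq, rfl⟩ := this
    rw [← clo_gammaBar]
    exact hm q hq
  have hV : ∀ V : Set G, V.Finite → ((clo (insert 1 V, ∅), 1) : Elt X G) ∈ P := by
    intro V hV
    induction V, hV using Set.Finite.induction_on with
    | empty => simpa [gammaOne] using hone
    | @insert a s _ _ ih =>
      have := hmul _ _ ih (hmul _ _ (hK a) (hK a⁻¹))
      rw [mulW_clo, mulW_clo] at this
      convert this using 1
      refine Prod.ext (congrArg clo (Prod.ext ?_ ?_)) ?_
      · ext z; simp [gunion, gmul, Set.image_insert_eq]; tauto
      · simp [gunion, gmul]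
      · simp
  have hE : ∀ V : Set G, V.Finite → 1 ∈ V → ∀ E : Set (G × YT X G), E.Finite →
      (∀ e ∈ E, (e.1 ∈ V ∧ e.1 * iotaY ι e.2 ∈ V) ∧ ∃ x, e.2 = Sum.inl x) →
      ((clo (V, E), 1) : Elt X G) ∈ P := by
    intro V hVf h1 E hE
    induction E, hE using Set.Finite.induction_on with
    | empty =>
      intro _
      have := hV V hVf
      rwa [Set.insert_eq_of_mem h1] at this
    | @insert e s _ _ ih =>
      intro h
      have ih' := ih fun e he => h e (Set.mem_insert_of_mem _ he)
      obtain ⟨⟨ha, hb⟩, x, hx⟩ := h e (Set.mem_insert _ _)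
      obtain ⟨a, y⟩ := e
      simp only at ha hb hx
      subst hx
      simp only [iotaY, Sum.elim_inl] at hb
      have := hmul _ _ ih' (hmul _ _ (hK a) (hmul _ _ (hX x) (hK (a * ι x)⁻¹)))
      rw [genW, mulW_clo, mulW_clo, mulW_clo] at this
      convert this using 1
      refine Prod.ext (congrArg clo (Prod.ext ?_ ?_)) ?_
      · ext z
        simp [gunion, gmul, gammaX, Set.image_insert_eq]
        constructor
        · tauto
        · rintro (rfl | rfl | rfl | h) <;> assumption
      · ext z; simp [gunion, gmul, gammaX]
      · simp
  obtain ⟨Γ, g⟩ := p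
  obtain ⟨⟨⟨hs, _⟩, hc⟩, hg⟩ := hp
  simp only at hs hc hg
  have hΓ := closed_eq ι Γ hs hc
  have h := hE Γ.1 hs.1 hs.2.2.1 {e ∈ Γ.2 | ∃ x, e.2 = Sum.inl x}
    (hs.2.1.subset fun e he => he.1) (fun e he => ⟨hs.2.2.2 e he.1, he.2⟩)
  have := hmul _ _ h (hK g)
  rw [mulW_clo] at this
  convert this using 1
  refine Prod.ext (hΓ.trans (congrArg clo (Prod.ext ?_ ?_))) ?_
  · ext z
    simp [gunion, gmul, Set.image_insert_eq]
    constructor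
    · tauto
    · rintro (rfl | rfl | h)
      · exact hs.2.2.1
      · exact hg
      · exact h
  · simp [gunion, gmul]
  · simp

end FInvPaper
end

section
/- The map (Γ, g) ↦ (Γ ∩ Cay(G,X), g), where Γ ∩ Cay(G,X) := (V(Γ), E(Γ) ∩ (G × X)) is obtained from Γ by erasing all edges labeled in Ḡ, is an isomorphism of F-inverse monoids from M^∧(G,Y) onto F(G,X): it is a bijection, it preserves multiplication, inversion and the m-operation (sending m(A,g) = (Γ_ḡ^∧, g) to m of the image, namely (({1,g},∅), g)), and it sends the generator (Γ_x^∧, [x]_G) to (Γ_x, [x]_G) for every x ∈ X. -/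
namespace FInvPaper

/-- A (candidate) subgraph of `Cay(G,X)`. -/
abbrev GraphX (X G : Type*) := Set G × Set (G × X)

variable {X G : Type*} [Group G]

/-- `Γ` is a finite subgraph of `Cay(G,X)` containing the origin. -/
def IsSubgraphX (ι : X → G) (Γ : GraphX X G) : Prop :=
  Γ.1.Finite ∧ Γ.2.Finite ∧ (1 : G) ∈ Γ.1 ∧
    ∀ e ∈ Γ.2, e.1 ∈ Γ.1 ∧ e.1 * ι e.2 ∈ Γ.1

/-- The edge relation of a subgraph of `Cay(G,X)`. -/
def edgeRelX (ι : X → G) (Γ : GraphX X G) (a b : G) : Prop :=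
  ∃ x : X, (a, x) ∈ Γ.2 ∧ b = a * ι x

/-- Connectedness of a subgraph of `Cay(G,X)`. -/
def IsConnX (ι : X → G) (Γ : GraphX X G) : Prop :=
  ∀ v ∈ Γ.1, Relation.EqvGen (edgeRelX ι Γ) 1 v

/-- `𝒳̃_X`: all finite (not necessarily connected) subgraphs of `Cay(G,X)`
containing the origin. -/
def tXX (ι : X → G) : Set (GraphX X G) := {Γ | IsSubgraphX ι Γ}

/-- The translate `gΓ` for subgraphs of `Cay(G,X)`. -/
def gmulX (g : G) (Γ : GraphX X G) : GraphX X G :=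
  ((g * ·) '' Γ.1, (fun e => (g * e.1, e.2)) '' Γ.2)

/-- Componentwise union. -/
def gunionX (Γ Δ : GraphX X G) : GraphX X G := (Γ.1 ∪ Δ.1, Γ.2 ∪ Δ.2)

/-- The carrier of `F(G,X)`. -/
def Fset (ι : X → G) : Set (GraphX X G × G) := {p | p.1 ∈ tXX ι ∧ p.2 ∈ p.1.1}

/-- Multiplication `(A,g)(B,h) = (A ∪ gB, gh)` (used both in `F(G,X)` and `M(G,X)`). -/
def mulMX (p q : GraphX X G × G) : GraphX X G × G :=
  (gunionX p.1 (gmulX p.2 q.1), p.2 * q.2)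

/-- Inversion `(A,g)⁻¹ = (g⁻¹A, g⁻¹)`. -/
def invMX (p : GraphX X G × G) : GraphX X G × G := (gmulX p.2⁻¹ p.1, p.2⁻¹)

/-- Erasing all edges with labels in `Ḡ`: the map `Γ ↦ Γ ∩ Cay(G,X)`. -/
def ff (Γ : Graph X G) : GraphX X G :=
  (Γ.1, {e : G × X | (e.1, (Sum.inl e.2 : YT X G)) ∈ Γ.2})

end FInvPaper

namespace FInvPaper

/-- The map `(Γ, g) ↦ (Γ ∩ Cay(G,X), g)` is an isomorphism of
`F`-inverse monoids from `M^∧(G,Y)` onto `F(G,X)`: a bijection preserving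
multiplication, inversion and the `m`-operation (sending `m(A,g) = (Γ_ḡ^∧, g)`
to `m` of the image, namely `(({1,g},∅), g)`), and sending the generator
`(Γ_x^∧, [x])` to `(Γ_x, [x])` for every `x ∈ X`. -/
theorem Mwedge_iso_FGX {X G : Type*} [Nonempty X] [Group G] (ι : X → G)
    (hgen : Subgroup.closure (Set.range ι) = ⊤) :
    -- the map sends `M^∧(G,Y)` into `F(G,X)`
    (∀ p : Elt X G, p ∈ Mwedge ι → ((ff p.1, p.2) : GraphX X G × G) ∈ Fset ι) ∧
    -- it is injective on `M^∧(G,Y)`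
    (∀ p q : Elt X G, p ∈ Mwedge ι → q ∈ Mwedge ι →
      ((ff p.1, p.2) : GraphX X G × G) = (ff q.1, q.2) → p = q) ∧
    -- it is surjective onto `F(G,X)`
    (∀ q ∈ Fset ι, ∃ p ∈ Mwedge ι, ((ff p.1, p.2) : GraphX X G × G) = q) ∧
    -- it preserves multiplication
    (∀ p q : Elt X G, p ∈ Mwedge ι → q ∈ Mwedge ι →
      ((ff (mulW p q).1, (mulW p q).2) : GraphX X G × G) =
        mulMX (ff p.1, p.2) (ff q.1, q.2)) ∧
    -- it preserves inversion
    (∀ p : Elt X G, p ∈ Mwedge ι →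
      ((ff (invM p).1, (invM p).2) : GraphX X G × G) = invMX (ff p.1, p.2)) ∧
    -- it preserves the `m`-operation
    (∀ p : Elt X G, p ∈ Mwedge ι →
      ((ff (mW p).1, (mW p).2) : GraphX X G × G) =
        ((({1, p.2}, ∅) : GraphX X G), p.2)) ∧
    -- it sends `(Γ_x^∧, [x])` to `(Γ_x, [x])`
    (∀ x : X, ((ff (clo (gammaX ι x)), ι x) : GraphX X G × G) =
      (((({1, ι x} : Set G), ({((1 : G), x)} : Set (G × X))) : GraphX X G), ι x)) := by
  have key : ∀ Γ : Graph X G, Γ ∈ XYw ι → ∀ a h : G,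
      ((a, Sum.inr h) ∈ Γ.2 ↔ a ∈ Γ.1 ∧ a * h ∈ Γ.1) := by
    rintro Γ ⟨⟨⟨_, _, _, h4⟩, _⟩, hc⟩ a h
    constructor
    · intro he
      exact h4 _ he
    · rintro ⟨ha, hb⟩
      have := hc a ha _ hb
      rwa [inv_mul_cancel_left] at this
  refine ⟨?_, ?_, ?_, ?_, ?_, ?_, ?_⟩
  · rintro ⟨Γ, g⟩ ⟨⟨⟨⟨h1, h2, h3, h4⟩, _⟩, _⟩, hg⟩
    refine ⟨⟨h1, ?_, h3, ?_⟩, hg⟩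
    · refine Set.Finite.preimage
        (f := fun e : G × X => (e.1, (Sum.inl e.2 : YT X G))) ?_ h2
      rintro ⟨a, x⟩ _ ⟨b, y⟩ _ h
      simpa using h
    · rintro ⟨a, x⟩ he
      exact h4 _ he
  · rintro ⟨⟨V, E⟩, g⟩ ⟨⟨V', E'⟩, g'⟩ hp hq h
    have k1 := key _ hp.1
    have k2 := key _ hq.1
    simp only [ff, Prod.mk.injEq] at h
    obtain ⟨⟨hV, hE⟩, hg⟩ := h
    subst hV hg
    have : E = E' := by
      ext ⟨a, y⟩
      rcases y with x | h
      · exact Set.ext_iff.1 hE (a, x)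
      · exact (k1 a h).trans (k2 a h).symm
    rw [this]
  · rintro ⟨⟨V, E⟩, g⟩ ⟨⟨h1, h2, h3, h4⟩, hg⟩
    refine ⟨(clo (V, (fun e : G × X => (e.1, (Sum.inl e.2 : YT X G))) '' E), g),
      ⟨⟨⟨⟨h1, ?_, h3, ?_⟩, ?_⟩, ?_⟩, hg⟩, ?_⟩
    · refine (h2.image _).union (((h1.prod h1).image
        (fun p : G × G => (p.1, (Sum.inr (p.1⁻¹ * p.2) : YT X G)))).subset ?_)
      rintro _ ⟨a, ha, b, hb, rfl⟩
      exact ⟨(a, b), ⟨ha, hb⟩, rfl⟩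
    · rintro _ (⟨⟨a, x⟩, he, rfl⟩ | ⟨a, ha, b, hb, rfl⟩)
      · exact h4 _ he
      · refine ⟨ha, ?_⟩
        simpa [iotaY, clo] using hb
    · intro v hv
      refine Relation.EqvGen.rel _ _ ⟨Sum.inr (1⁻¹ * v), Or.inr ⟨1, h3, v, hv, rfl⟩, ?_⟩
      simp [iotaY]
    · intro a ha b hb
      exact Or.inr ⟨a, ha, b, hb, rfl⟩
    · simp [ff, clo]
  · rintro ⟨⟨V, E⟩, g⟩ ⟨⟨V', E'⟩, g'⟩ _ _
    simp only [ff, mulW, mulMX, clo, gunion, gunionX, gmul, gmulX, Prod.mk.injEq, and_true,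
      true_and]
    ext ⟨a, x⟩
    simp
  · rintro ⟨⟨V, E⟩, g⟩ _
    simp only [ff, invM, invMX, gmul, gmulX, Prod.mk.injEq, and_true, true_and]
    ext ⟨a, x⟩
    simp
  · rintro ⟨⟨V, E⟩, g⟩ _
    simp [ff, mW, clo, gammaBar]
  · intro x
    simp only [ff, clo, gammaX, Prod.mk.injEq, and_true, true_and]
    ext ⟨a, y⟩
    simp

end FInvPaper
end

section
/- Let a group G act partially on a meet-semilattice (L,⊓) by order isomorphisms between order ideals, and let j be a G-invariant dual-closure operator on L. Then the relation ρ̃_j on L ⋊ G defined by (e,g) ρ̃_j (f,h) iff g = h and j(e) = j(f) is a congruence of the inverse semigroup L ⋊ G: it is an equivalence relation, and if (e,g) ρ̃_j (f,h) then for every (d,s) ∈ L ⋊ G both (e,g)(d,s) ρ̃_j (f,h)(d,s) and (d,s)(e,g) ρ̃_j (d,s)(f,h), and (e,g)⁻¹ ρ̃_j (f,h)⁻¹; moreover ρ̃_j is contained in the minimum group congruence σ of L ⋊ G (two elements of L ⋊ G being σ-related iff their group components are equal). -/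
namespace FInvPaper

/-- A partial action of a group `G` on a meet-semilattice `L` by order
isomorphisms between order ideals: for each `g`, an order ideal `D g` and an
order isomorphism `act g : D g⁻¹ → D g` (encoded as a total function whose
relevant values are those on `D g⁻¹`). -/
structure PartialAction (G L : Type*) [Group G] [SemilatticeInf L] where
  /-- The domain ideals. -/
  D : G → Set L
  /-- The partial translations (as total functions). -/
  act : G → L → L
  /-- Each `D g` is an order ideal. -/
  ideal : ∀ g : G, ∀ x y : L, x ≤ y → y ∈ D g → x ∈ D g
  /-- `act g` maps `D g⁻¹` into `D g`. -/
  mem_act : ∀ g : G, ∀ x ∈ D g⁻¹, act g x ∈ D g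
  /-- `act g` is an order embedding on `D g⁻¹`. -/
  act_le_iff : ∀ g : G, ∀ x ∈ D g⁻¹, ∀ y ∈ D g⁻¹, (act g x ≤ act g y ↔ x ≤ y)
  /-- `act g` maps `D g⁻¹` onto `D g`. -/
  act_surj : ∀ g : G, ∀ z ∈ D g, ∃ x ∈ D g⁻¹, act g x = z
  /-- `D 1 = L`. -/
  D_one : D 1 = Set.univ
  /-- `act 1 = id`. -/
  act_one : ∀ x : L, act 1 x = x
  /-- `act g⁻¹` inverts `act g`. -/
  act_inv : ∀ g : G, ∀ x ∈ D g⁻¹, act g⁻¹ (act g x) = x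
  /-- Compatibility with composition. -/
  act_comp : ∀ g h : G, ∀ x ∈ D h⁻¹, act h x ∈ D g⁻¹ →
    x ∈ D (g * h)⁻¹ ∧ act (g * h) x = act g (act h x)

namespace PartialAction

variable {G L : Type*} [Group G] [SemilatticeInf L]

/-- The carrier of the partial action product `L ⋊ G`. -/
def carrier (P : PartialAction G L) : Set (L × G) := {p | p.1 ∈ P.D p.2}

/-- Multiplication of `L ⋊ G`: `(e,g)(f,h) = (φ_g(φ_{g⁻¹}(e) ⊓ f), gh)`. -/
def mul (P : PartialAction G L) (p q : L × G) : L × G :=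
  (P.act p.2 (P.act p.2⁻¹ p.1 ⊓ q.1), p.2 * q.2)

/-- Inversion of `L ⋊ G`: `(e,g)⁻¹ = (φ_{g⁻¹}(e), g⁻¹)`. -/
def inv (P : PartialAction G L) (p : L × G) : L × G := (P.act p.2⁻¹ p.1, p.2⁻¹)

/-- The natural partial order of `L ⋊ G`: `s ≤ t` iff `s = (s s⁻¹) t`. -/
def nle (P : PartialAction G L) (p q : L × G) : Prop :=
  p = P.mul (P.mul p (P.inv p)) q

/-- The minimum group congruence `σ` of `L ⋊ G`. -/
def sigma (P : PartialAction G L) (p q : L × G) : Prop :=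
  ∃ u ∈ P.carrier, P.nle u p ∧ P.nle u q

/-- A dual-closure operator `j` on `L` is `G`-invariant if `act g (j x) = j (act g x)`
whenever `x ∈ D g⁻¹` (in particular `j x ∈ D g⁻¹` then). -/
def GInvariant (P : PartialAction G L) (j : L → L) : Prop :=
  ∀ g : G, ∀ x ∈ P.D g⁻¹, j x ∈ P.D g⁻¹ ∧ P.act g (j x) = j (P.act g x)

end PartialAction

end FInvPaper

namespace FInvPaper

open PartialAction

/-- Let a group `G` act partially on a meet-semilattice `L` by
order isomorphisms between order ideals, and let `j` be a `G`-invariant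
dual-closure operator on `L`.  Then `ρ̃_j`, defined by `(e,g) ρ̃_j (f,h)` iff
`g = h` and `j e = j f`, is a congruence of the inverse semigroup `L ⋊ G`
contained in the minimum group congruence `σ`. -/
theorem rhoJtilde_congruence {G L : Type*} [Group G] [SemilatticeInf L]
    (P : PartialAction G L) (j : L → L)
    (hj_le : ∀ x : L, j x ≤ x)
    (hj_mono : ∀ x y : L, x ≤ y → j x ≤ j y)
    (hj_idem : ∀ x : L, j (j x) = j x)
    (hGinv : P.GInvariant j) :
    -- `ρ̃_j` is an equivalence relation
    Equivalence (fun p q : L × G => p.2 = q.2 ∧ j p.1 = j q.1) ∧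
    -- it is compatible with multiplication and inversion
    (∀ p q r : L × G, p ∈ P.carrier → q ∈ P.carrier → r ∈ P.carrier →
      (p.2 = q.2 ∧ j p.1 = j q.1) →
      ((P.mul p r).2 = (P.mul q r).2 ∧ j (P.mul p r).1 = j (P.mul q r).1) ∧
      ((P.mul r p).2 = (P.mul r q).2 ∧ j (P.mul r p).1 = j (P.mul r q).1) ∧
      ((P.inv p).2 = (P.inv q).2 ∧ j (P.inv p).1 = j (P.inv q).1)) ∧
    -- it is contained in `σ`
    (∀ p q : L × G, p ∈ P.carrier → q ∈ P.carrier →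
      (p.2 = q.2 ∧ j p.1 = j q.1) → P.sigma p q) := by
  have key : ∀ x x' y : L, j x = j x' → j (x ⊓ y) ≤ j (x' ⊓ y) := by
    intro x x' y h
    have h1 : j (x ⊓ y) ≤ x' ⊓ y :=
      le_inf (((hj_mono _ _ inf_le_left).trans h.le).trans (hj_le x'))
        ((hj_le _).trans inf_le_right)
    have h2 := hj_mono _ _ h1
    rwa [hj_idem] at h2
  have key' : ∀ x x' y : L, j x = j x' → j (x ⊓ y) = j (x' ⊓ y) := fun x x' y h =>
    le_antisymm (key x x' y h) (key x' x y h.symm)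
  have hact : ∀ (g : G) (x y : L), x ∈ P.D g⁻¹ → y ∈ P.D g⁻¹ → j x = j y →
      j (P.act g x) = j (P.act g y) := by
    intro g x y hx hy h
    rw [← (hGinv g x hx).2, ← (hGinv g y hy).2, h]
  have hmem : ∀ (g : G) (x : L), x ∈ P.D g → P.act g⁻¹ x ∈ P.D g⁻¹ := by
    intro g x hx
    exact P.mem_act g⁻¹ x (by rwa [inv_inv])
  have hnle : ∀ (g : G) (x y : L), x ∈ P.D g → x ≤ y → P.nle (x, g) (y, g) := by
    intro g x y hx hxy
    have h := P.act_inv g⁻¹ x (by rwa [inv_inv])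
    rw [inv_inv] at h
    simp [PartialAction.nle, PartialAction.mul, PartialAction.inv, P.act_one, h, hxy]
  refine ⟨⟨fun _ => ⟨rfl, rfl⟩, fun h => ⟨h.1.symm, h.2.symm⟩,
    fun h k => ⟨h.1.trans k.1, h.2.trans k.2⟩⟩, ?_, ?_⟩
  · rintro ⟨e, g⟩ ⟨f, g'⟩ ⟨d, s⟩ hp hq hr ⟨h, hj⟩
    dsimp only at h hj
    subst h
    have he : e ∈ P.D g := hp
    have hf : f ∈ P.D g := hq
    have hd : d ∈ P.D s := hr
    have hi : j (P.act g⁻¹ e) = j (P.act g⁻¹ f) :=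
      hact g⁻¹ e f (by rwa [inv_inv]) (by rwa [inv_inv]) hj
    refine ⟨⟨rfl, ?_⟩, ⟨rfl, ?_⟩, rfl, hi⟩
    · exact hact g _ _ (P.ideal _ _ _ inf_le_left (hmem g e he))
        (P.ideal _ _ _ inf_le_left (hmem g f hf)) (key' _ _ _ hi)
    · refine hact s _ _ (P.ideal _ _ _ inf_le_left (hmem s d hd))
        (P.ideal _ _ _ inf_le_left (hmem s d hd)) ?_
      dsimp only
      rw [inf_comm _ e, inf_comm _ f]
      exact key' _ _ _ hj
  · rintro ⟨e, g⟩ ⟨f, g'⟩ hp hq ⟨h, hj⟩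
    dsimp only at h hj
    subst h
    have hu : j e ∈ P.D g := P.ideal _ _ _ (hj_le e) hp
    exact ⟨(j e, g), hu, hnle g _ _ hu (hj_le e), hnle g _ _ hu (hj.le.trans (hj_le f))⟩

end FInvPaper
end

section
/- Let a group G act partially on a meet-semilattice (L,⊓) by order isomorphisms between order ideals, and let j be a G-invariant dual-closure operator on L. Let L_j := {x ∈ L : j(x) = x} = j(L), and define on the set L_j ⋊ G := {(e,g) : e ∈ D_g ∩ L_j} the multiplication (e,g)·(f,h) := (j(φ_g(φ_{g⁻¹}(e) ⊓ f)), gh). Then the map L ⋊ G → L_j ⋊ G, (e,g) ↦ (j(e), g), is well defined and surjective, preserves multiplication, and two elements of L ⋊ G have the same image if and only if they are ρ̃_j-related; hence (L ⋊ G)/ρ̃_j is isomorphic to L_j ⋊ G. -/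
namespace FInvPaper

open PartialAction

/-- With `G`, `L`, `j` as in Statement 4, let
`L_j = {x : j x = x}` and let `L_j ⋊ G = {(e,g) : e ∈ D g ∩ L_j}` carry the
multiplication `(e,g)·(f,h) = (j (φ_g (φ_{g⁻¹} e ⊓ f)), gh)`.  Then the map
`L ⋊ G → L_j ⋊ G`, `(e,g) ↦ (j e, g)`, is well defined and surjective, preserves
multiplication, and identifies exactly the `ρ̃_j`-related pairs; hence
`(L ⋊ G)/ρ̃_j ≅ L_j ⋊ G`. -/
theorem quotient_by_rhoJtilde {G L : Type*} [Group G] [SemilatticeInf L]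
    (P : PartialAction G L) (j : L → L)
    (hj_le : ∀ x : L, j x ≤ x)
    (hj_mono : ∀ x y : L, x ≤ y → j x ≤ j y)
    (hj_idem : ∀ x : L, j (j x) = j x)
    (hGinv : P.GInvariant j) :
    -- the map is well defined: it lands in `L_j ⋊ G`
    (∀ p : L × G, p ∈ P.carrier → (j p.1 ∈ P.D p.2 ∧ j (j p.1) = j p.1)) ∧
    -- it is surjective onto `L_j ⋊ G`
    (∀ q : L × G, q.1 ∈ P.D q.2 → j q.1 = q.1 →
      ∃ p ∈ P.carrier, ((j p.1, p.2) : L × G) = q) ∧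
    -- it preserves multiplication (the product in `L_j ⋊ G` of the images)
    (∀ p q : L × G, p ∈ P.carrier → q ∈ P.carrier →
      ((j (P.mul p q).1, (P.mul p q).2) : L × G) =
        (j (P.act p.2 (P.act p.2⁻¹ (j p.1) ⊓ j q.1)), p.2 * q.2)) ∧
    -- two elements have the same image iff they are `ρ̃_j`-related
    (∀ p q : L × G, p ∈ P.carrier → q ∈ P.carrier →
      (((j p.1, p.2) : L × G) = (j q.1, q.2) ↔ (p.2 = q.2 ∧ j p.1 = j q.1))) := by
  refine ⟨fun p hp => ⟨P.ideal _ _ _ (hj_le _) hp, hj_idem _⟩,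
    fun q hq hjq => ⟨q, hq, by rw [hjq]⟩, ?_, ?_⟩
  · rintro ⟨e, g⟩ ⟨f, h⟩ hp -
    have he : e ∈ P.D g⁻¹⁻¹ := by rw [inv_inv]; exact hp
    have ha : P.act g⁻¹ e ∈ P.D g⁻¹ := P.mem_act g⁻¹ e he
    have key : j (P.act g⁻¹ e ⊓ f) = j (j (P.act g⁻¹ e) ⊓ j f) := by
      apply le_antisymm
      · rw [← hj_idem (P.act g⁻¹ e ⊓ f)]
        exact hj_mono _ _ (le_inf (hj_mono _ _ inf_le_left) (hj_mono _ _ inf_le_right))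
      · exact hj_mono _ _ (inf_le_inf (hj_le _) (hj_le _))
    have h1 := hGinv g (P.act g⁻¹ e ⊓ f) (P.ideal _ _ _ inf_le_left ha)
    have h2 := hGinv g (j (P.act g⁻¹ e) ⊓ j f)
      (P.ideal _ _ _ (inf_le_left.trans (hj_le _)) ha)
    have h3 : j (P.act g (P.act g⁻¹ e ⊓ f)) = j (P.act g (P.act g⁻¹ (j e) ⊓ j f)) := by
      rw [(hGinv g⁻¹ e he).2, ← h1.2, ← h2.2, key]
    exact Prod.ext h3 rfl
  · intro p q _ _
    rw [Prod.mk.injEq, and_comm]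

end FInvPaper
end

section
/- The map f : 𝒳_Y^∧ → 𝒳̃_X defined by f(Γ) := Γ ∩ Cay(G,X) = (V(Γ), E(Γ) ∩ (G × X)) is a bijection and satisfies f((Γ₁ ∪ Γ₂)^∧) = f(Γ₁) ∪ f(Γ₂) for all Γ₁, Γ₂ ∈ 𝒳_Y^∧; that is, f is an isomorphism from the semilattice (𝒳_Y^∧, (Γ₁,Γ₂) ↦ (Γ₁ ∪ Γ₂)^∧) onto the semilattice (𝒳̃_X, ∪). -/
namespace FInvPaper

/-- The map `f : 𝒳_Y^∧ → 𝒳̃_X`,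
`f(Γ) = Γ ∩ Cay(G,X) = (V(Γ), E(Γ) ∩ (G × X))`, is a bijection and satisfies
`f((Γ₁ ∪ Γ₂)^∧) = f(Γ₁) ∪ f(Γ₂)`; that is, it is an isomorphism of semilattices
`(𝒳_Y^∧, (Γ₁,Γ₂) ↦ (Γ₁ ∪ Γ₂)^∧) → (𝒳̃_X, ∪)`. -/
theorem ff_semilattice_iso {X G : Type*} [Nonempty X] [Group G] (ι : X → G)
    (hgen : Subgroup.closure (Set.range ι) = ⊤) :
    -- `f` maps `𝒳_Y^∧` into `𝒳̃_X`
    (∀ Γ ∈ XYw ι, ff Γ ∈ tXX ι) ∧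
    -- `f` is injective on `𝒳_Y^∧`
    (∀ Γ ∈ XYw ι, ∀ Δ ∈ XYw ι, ff Γ = ff Δ → Γ = Δ) ∧
    -- `f` is surjective onto `𝒳̃_X`
    (∀ Δ ∈ tXX ι, ∃ Γ ∈ XYw ι, ff Γ = Δ) ∧
    -- `f` transforms the meet of `𝒳_Y^∧` into union
    (∀ Γ₁ ∈ XYw ι, ∀ Γ₂ ∈ XYw ι,
      ff (clo (gunion Γ₁ Γ₂)) = gunionX (ff Γ₁) (ff Γ₂)) := by
  have key : ∀ Γ ∈ XYw ι, ∀ Δ ∈ XYw ι, ff Γ = ff Δ → Γ.2 ⊆ Δ.2 := by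
    rintro ⟨V, E⟩ ⟨⟨⟨_, _, _, hE⟩, _⟩, _⟩ ⟨W, F⟩ ⟨_, hF⟩ h
    simp only [ff, Prod.mk.injEq] at h
    obtain ⟨rfl, h⟩ := h
    rintro ⟨a, x | g⟩ he
    · exact (Set.ext_iff.1 h (a, x)).1 he
    · obtain ⟨h1, h2⟩ := hE _ he
      have := hF a h1 _ h2
      simpa [iotaY] using this
  refine ⟨?_, ?_, ?_, ?_⟩
  · rintro ⟨V, E⟩ ⟨⟨⟨hV, hfin, h1, hE⟩, _⟩, _⟩
    refine ⟨hV, ?_, h1, fun e he => hE _ he⟩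
    refine hfin.preimage (f := fun e : G × X => (e.1, (Sum.inl e.2 : YT X G))) ?_
    rintro ⟨a, x⟩ _ ⟨b, y⟩ _ h
    simpa using h
  · intro Γ hΓ Δ hΔ h
    have h1 : Γ.1 = Δ.1 := (Prod.ext_iff.1 h).1
    exact Prod.ext h1 (Set.Subset.antisymm (key Γ hΓ Δ hΔ h) (key Δ hΔ Γ hΓ h.symm))
  · rintro ⟨V, E⟩ ⟨hV, hfin, h1, hE⟩
    refine ⟨clo (V, (fun e : G × X => (e.1, (Sum.inl e.2 : YT X G))) '' E),
      ⟨⟨⟨hV, ?_, h1, ?_⟩, ?_⟩, ?_⟩, ?_⟩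
    · refine (hfin.image _).union (((hV.prod hV).image
        (fun p : G × G => (p.1, (Sum.inr (p.1⁻¹ * p.2) : YT X G)))).subset ?_)
      rintro e ⟨a, ha, b, hb, rfl⟩
      exact ⟨(a, b), ⟨ha, hb⟩, rfl⟩
    · rintro e (⟨e, he, rfl⟩ | ⟨a, ha, b, hb, rfl⟩)
      · exact hE e he
      · exact ⟨ha, by simpa [iotaY, clo] using hb⟩
    · intro v hv
      exact Relation.EqvGen.rel _ _
        ⟨Sum.inr (1⁻¹ * v), Or.inr ⟨1, h1, v, hv, rfl⟩, by simp [iotaY]⟩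
    · intro a ha b hb
      exact Or.inr ⟨a, ha, b, hb, rfl⟩
    · refine Prod.ext rfl ?_
      ext ⟨a, x⟩
      simp [ff, clo]
  · intro Γ₁ _ Γ₂ _
    refine Prod.ext rfl ?_
    ext ⟨a, x⟩
    simp [ff, clo, gunion, gunionX]

end FInvPaper
end

section
/- Let F be an inverse monoid and ψ : M(G,Y) → F a monoid homomorphism with ψ(s⁻¹) = ψ(s)⁻¹ for all s ∈ M(G,Y), and suppose that for every g ∈ G and every (A,g) ∈ M(G,Y) one has ψ(A,g) ≤ ψ(Γ_ḡ, g) in the natural partial order of F. Then ψ(A,g) = ψ(A^∧, g) for every (A,g) ∈ M(G,Y); consequently ψ factors through the map M(G,Y) → M^∧(G,Y), (A,g) ↦ (A^∧, g). -/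
namespace FInvPaper

theorem eqvGen_gmul {X G : Type*} [Group G] (ι : X → G) (Γ : Graph X G) (g a b : G)
    (h : Relation.EqvGen (edgeRel ι Γ) a b) :
    Relation.EqvGen (edgeRel ι (gmul g Γ)) (g * a) (g * b) := by
  induction h with
  | rel x y h =>
    obtain ⟨l, hl, rfl⟩ := h
    exact .rel _ _ ⟨l, ⟨(x, l), hl, rfl⟩, by rw [mul_assoc]⟩
  | refl x => exact .refl _
  | symm x y _ ih => exact .symm _ _ ih
  | trans x y z _ _ ih1 ih2 => exact .trans _ _ _ ih1 ih2

theorem eqvGen_sub {X G : Type*} [Group G] (ι : X → G) {Γ Δ : Graph X G} (hs : Γ.2 ⊆ Δ.2)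
    {a b : G} (h : Relation.EqvGen (edgeRel ι Γ) a b) :
    Relation.EqvGen (edgeRel ι Δ) a b :=
  h.mono (fun _ _ ⟨y, hy, e⟩ => ⟨y, hs hy, e⟩)

theorem mem_translate {X G : Type*} [Group G] (ι : X → G) (A : Graph X G) (hA : A ∈ XY ι)
    (a b : G) (ha : a ∈ A.1) (hb : b ∈ A.1) :
    ((gmul a⁻¹ A, a⁻¹ * b) : Elt X G) ∈ Mset ι := by
  obtain ⟨⟨h1, h2, h3, h4⟩, h5⟩ := hA
  refine ⟨⟨⟨h1.image _, h2.image _, ⟨a, ha, by simp⟩, ?_⟩, ?_⟩, ⟨b, hb, rfl⟩⟩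
  · rintro _ ⟨e, he, rfl⟩
    exact ⟨⟨_, (h4 e he).1, rfl⟩, ⟨_, (h4 e he).2, by simp [mul_assoc]⟩⟩
  · rintro _ ⟨v, hv, rfl⟩
    have := eqvGen_gmul ι A a⁻¹ a v (.trans _ _ _ (.symm _ _ (h5 a ha)) (h5 v hv))
    simpa using this

theorem mem_mulM {X G : Type*} [Group G] (ι : X → G) (p q : Elt X G) (hp : p ∈ Mset ι)
    (hq : q ∈ Mset ι) : mulM p q ∈ Mset ι := by
  obtain ⟨⟨⟨h1, h2, h3, h4⟩, h5⟩, h6⟩ := hp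
  obtain ⟨⟨⟨k1, k2, k3, k4⟩, k5⟩, k6⟩ := hq
  refine ⟨⟨⟨h1.union (k1.image _), h2.union (k2.image _), Or.inl h3, ?_⟩, ?_⟩,
    Or.inr ⟨_, k6, rfl⟩⟩
  · rintro e (he | ⟨e, he, rfl⟩)
    · exact ⟨Or.inl (h4 e he).1, Or.inl (h4 e he).2⟩
    · exact ⟨Or.inr ⟨_, (k4 e he).1, rfl⟩, Or.inr ⟨_, (k4 e he).2, by simp [mul_assoc]⟩⟩
  · rintro v (hv | ⟨v, hv, rfl⟩)
    · exact eqvGen_sub ι Set.subset_union_left (h5 v hv)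
    · refine .trans _ _ _ (eqvGen_sub ι Set.subset_union_left (h5 _ h6)) ?_
      have := eqvGen_gmul ι q.1 p.2 1 v (k5 v hv)
      rw [mul_one] at this
      exact eqvGen_sub ι Set.subset_union_right this

theorem mem_gammaBar {X G : Type*} [Group G] (ι : X → G) (g : G) :
    ((gammaBar g, g) : Elt X G) ∈ Mset ι := by
  refine ⟨⟨⟨by simp [gammaBar], by simp [gammaBar], by simp [gammaBar], ?_⟩, ?_⟩,
    by simp [gammaBar]⟩
  · rintro e he
    obtain rfl : e = (1, Sum.inr g) := he
    simp [gammaBar, iotaY]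
  · rintro v (rfl | rfl)
    · exact .refl _
    · exact .rel _ _ ⟨Sum.inr v, rfl, by simp [iotaY]⟩

theorem mem_addEdge {X G : Type*} [Group G] (ι : X → G) (A : Graph X G) (g a b : G)
    (hA : ((A, g) : Elt X G) ∈ Mset ι) (ha : a ∈ A.1) (hb : b ∈ A.1) :
    (((A.1, insert (a, Sum.inr (a⁻¹ * b)) A.2), g) : Elt X G) ∈ Mset ι := by
  obtain ⟨⟨⟨h1, h2, h3, h4⟩, h5⟩, h6⟩ := hA
  refine ⟨⟨⟨h1, h2.insert _, h3, ?_⟩, ?_⟩, h6⟩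
  · rintro e (rfl | he)
    · exact ⟨ha, by simpa [iotaY] using hb⟩
    · exact h4 e he
  · intro v hv
    exact eqvGen_sub ι (Set.subset_insert _ _) (h5 v hv)

theorem gmul_gmul {X G : Type*} [Group G] (g h : G) (A : Graph X G) :
    gmul g (gmul h A) = gmul (g * h) A := by
  simp only [gmul, Set.image_image, mul_assoc]

theorem gmul_one' {X G : Type*} [Group G] (A : Graph X G) : gmul 1 A = A := by
  simp [gmul]

theorem gunion_self {X G : Type*} (A : Graph X G) : gunion A A = A := by
  simp [gunion]

theorem psi_addEdge {X G F : Type*} [Group G] [InverseMonoid F] (ι : X → G)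
    (ψ : Elt X G → F)
    (hmul : ∀ p q : Elt X G, p ∈ Mset ι → q ∈ Mset ι →
      ψ (mulM p q) = ψ p * ψ q)
    (hinv : ∀ p : Elt X G, p ∈ Mset ι → ψ (invM p) = (ψ p)⁻¹)
    (hle : ∀ p : Elt X G, p ∈ Mset ι →
      nle (ψ p) (ψ ((gammaBar p.2, p.2) : Elt X G)))
    (A : Graph X G) (g a b : G)
    (hA : ((A, g) : Elt X G) ∈ Mset ι) (ha : a ∈ A.1) (hb : b ∈ A.1) :
    ψ (A, g) = ψ ((A.1, insert (a, Sum.inr (a⁻¹ * b)) A.2), g) := by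
  have m1 : ((A, a) : Elt X G) ∈ Mset ι := ⟨hA.1, ha⟩
  have m2 := mem_translate ι A hA.1 a b ha hb
  have m3 := mem_translate ι A hA.1 b g hb hA.2
  have m4 := mem_gammaBar ι (a⁻¹ * b)
  have m5 : invM ((gmul a⁻¹ A, a⁻¹ * b) : Elt X G) ∈ Mset ι := by
    have := mem_translate ι A hA.1 b a hb ha
    simpa [invM, gmul_gmul] using this
  have m6 := mem_mulM ι _ _ m2 m5
  have key : ψ (gmul a⁻¹ A, a⁻¹ * b)
      = ψ (mulM (mulM (gmul a⁻¹ A, a⁻¹ * b) (invM (gmul a⁻¹ A, a⁻¹ * b)))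
          (gammaBar (a⁻¹ * b), a⁻¹ * b)) := by
    rw [hmul _ _ m6 m4, hmul _ _ m2 m5, hinv _ m2]
    exact hle _ m2
  have e1 : ((A, g) : Elt X G)
      = mulM (mulM (A, a) (gmul a⁻¹ A, a⁻¹ * b)) (gmul b⁻¹ A, b⁻¹ * g) := by
    simp [mulM, gmul_gmul, gmul_one', gunion_self]
  have e2 : (((A.1, insert (a, Sum.inr (a⁻¹ * b)) A.2), g) : Elt X G)
      = mulM (mulM (A, a) (mulM (mulM (gmul a⁻¹ A, a⁻¹ * b) (invM (gmul a⁻¹ A, a⁻¹ * b)))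
          (gammaBar (a⁻¹ * b), a⁻¹ * b))) (gmul b⁻¹ A, b⁻¹ * g) := by
    have hg : ∀ (B C : Graph X G), gmul a (gunion B C) = gunion (gmul a B) (gmul a C) := by
      intro B C
      simp [gmul, gunion, Set.image_union]
    simp only [mulM, invM, gmul_gmul, hg, gunion_self]
    simp only [mul_inv_cancel, mul_inv_cancel_left, one_mul, gmul_one', gmul_gmul, mul_one,
      mul_inv_rev, inv_inv, mul_assoc, inv_mul_cancel_left, gunion_self]
    refine Prod.ext (Prod.ext ?_ ?_) rfl
    · ext v
      have hav : a⁻¹ * v = 1 ↔ v = a := by rw [inv_mul_eq_one, eq_comm]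
      simp [gunion, gmul, gammaBar, hav]
      clear * - ha hb
      grind
    · ext v
      simp [gunion, gmul, gammaBar]
  rw [e2, e1, hmul _ _ (mem_mulM ι _ _ m1 m2) m3, hmul _ _ m1 m2, key,
    hmul _ _ (mem_mulM ι _ _ m1 (mem_mulM ι _ _ m6 m4)) m3, hmul _ _ m1 (mem_mulM ι _ _ m6 m4)]

/-- Let `F` be an inverse monoid and `ψ : M(G,Y) → F` a
monoid homomorphism preserving inversion, and suppose that
`ψ(A,g) ≤ ψ(Γ_ḡ, g)` in the natural partial order of `F` for every
`(A,g) ∈ M(G,Y)`.  Then `ψ(A,g) = ψ(A^∧, g)` for every `(A,g) ∈ M(G,Y)`;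
consequently `ψ` factors through `M(G,Y) → M^∧(G,Y)`, `(A,g) ↦ (A^∧, g)`. -/
theorem psi_factors_through_Mwedge {X G F : Type*} [Nonempty X] [Group G]
    [InverseMonoid F] (ι : X → G)
    (hgen : Subgroup.closure (Set.range ι) = ⊤)
    (ψ : Elt X G → F)
    (hone : ψ ((gammaOne, 1) : Elt X G) = 1)
    (hmul : ∀ p q : Elt X G, p ∈ Mset ι → q ∈ Mset ι →
      ψ (mulM p q) = ψ p * ψ q)
    (hinv : ∀ p : Elt X G, p ∈ Mset ι → ψ (invM p) = (ψ p)⁻¹)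
    (hle : ∀ p : Elt X G, p ∈ Mset ι →
      nle (ψ p) (ψ ((gammaBar p.2, p.2) : Elt X G))) :
    (∀ p : Elt X G, p ∈ Mset ι → ψ p = ψ ((clo p.1, p.2) : Elt X G)) ∧
    ∃ φ : Elt X G → F, ∀ p : Elt X G, p ∈ Mset ι →
      ψ p = φ ((clo p.1, p.2) : Elt X G) := by
  have main : ∀ p : Elt X G, p ∈ Mset ι → ψ p = ψ ((clo p.1, p.2) : Elt X G) := by
    rintro ⟨A, g⟩ hp
    have hfin : {e : G × YT X G | ∃ a ∈ A.1, ∃ b ∈ A.1, e = (a, Sum.inr (a⁻¹ * b))}.Finite := by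
      have hV : A.1.Finite := hp.1.1.1
      refine ((hV.prod hV).image (fun x : G × G =>
        ((x.1, Sum.inr (x.1⁻¹ * x.2)) : G × YT X G))).subset ?_
      rintro e ⟨a, ha, b, hb, rfl⟩
      exact ⟨(a, b), ⟨ha, hb⟩, rfl⟩
    have := Set.Finite.induction_on_subset
      (motive := fun S _ => (((A.1, A.2 ∪ S), g) : Elt X G) ∈ Mset ι ∧
        ψ (A, g) = ψ ((A.1, A.2 ∪ S), g)) _ hfin (by simpa using hp) (by
        rintro e S ⟨a, ha, b, hb, rfl⟩ _ _ ⟨ih1, ih2⟩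
        rw [Set.union_insert]
        exact ⟨mem_addEdge ι _ g a b ih1 ha hb,
          ih2.trans (psi_addEdge ι ψ hmul hinv hle _ g a b ih1 ha hb)⟩)
    exact this.2
  exact ⟨main, ψ, main⟩

end FInvPaper
end

section
/- For every nonempty word w = y₁ ⋯ y_n over Y ∪ Y⁻¹, set g₀ = 1 and g_i = g_{i−1}·ι_Y-value of y_i (i.e. g_i = g_{i−1}·ι_Y(y) if y_i = y ∈ Y and g_i = g_{i−1}·ι_Y(y)⁻¹ if y_i = y⁻¹), and let Γ_w be the subgraph of Cay(G,Y) with vertex set {g₀, g₁, …, g_n} and positive edge set consisting, for each i, of (g_{i−1}, y) if y_i = y ∈ Y and of (g_i, y) if y_i = y⁻¹. Then Γ_w ∈ 𝒳_Y and the value of w in M(G,Y) (under the generating map y ↦ (Γ_y, ι_Y(y)) for y ∈ Y, extended to inverse letters by inversion) equals (Γ_w, g_n); the value of the empty word is (Γ_1, 1). -/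
namespace FInvPaper

variable {X G : Type*} [Group G]

/-- The graph `Γ_y` for a letter `y ∈ Y`: vertices `1, ι_Y(y)` and the positive
edge `(1, y)`. -/
def gammaY (ι : X → G) (y : YT X G) : Graph X G := ({1, iotaY ι y}, {((1 : G), y)})

/-- The generator `(Γ_y, ι_Y(y))` of `M(G,Y)`. -/
def genM (ι : X → G) (y : YT X G) : Elt X G := (gammaY ι y, iotaY ι y)

/-- The `G`-value of a signed letter over `Y`. -/
def sval (ι : X → G) (l : YT X G × Bool) : G :=
  if l.2 then iotaY ι l.1 else (iotaY ι l.1)⁻¹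

/-- The `G`-value `g_n` of a word over `Y ∪ Y⁻¹`. -/
def evalSigned (ι : X → G) : List (YT X G × Bool) → G
  | [] => 1
  | l :: w => sval ι l * evalSigned ι w

/-- The graph `Γ_w` of the word `w` read from the vertex `g`: its vertices are
the partial products `g = g₀, g₁, …, g_n`, with the positive edge
`(g_{i-1}, y)` for a positive letter `y` and `(g_i, y)` for a negative one. -/
def wordGraph (ι : X → G) : G → List (YT X G × Bool) → Graph X G
  | g, [] => ({g}, ∅)
  | g, l :: w =>
      gunion ({g, g * sval ι l}, {((if l.2 then g else g * sval ι l), l.1)})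
        (wordGraph ι (g * sval ι l) w)

/-- The value of a word over `Y ∪ Y⁻¹` in `M(G,Y)` under `y ↦ (Γ_y, ι_Y(y))`,
extended to inverse letters by inversion; the empty word has value `(Γ_1, 1)`. -/
def evalWordM (ι : X → G) : List (YT X G × Bool) → Elt X G
  | [] => (gammaOne, 1)
  | l :: w => mulM (if l.2 then genM ι l.1 else invM (genM ι l.1)) (evalWordM ι w)

theorem gmul_gunion (h : G) (A B : Graph X G) :
    gmul h (gunion A B) = gunion (gmul h A) (gmul h B) := by
  simp only [gmul, gunion, Set.image_union]

theorem wordGraph_gmul (ι : X → G) (w : List (YT X G × Bool)) (h g : G) :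
    wordGraph ι (h * g) w = gmul h (wordGraph ι g w) := by
  induction w generalizing g with
  | nil => simp [wordGraph, gmul]
  | cons l w ih =>
    simp only [wordGraph, gmul_gunion]
    rw [mul_assoc, ih]
    congr 1
    rcases l with ⟨y, b⟩
    cases b <;> simp [gmul, Set.image_pair]

theorem eval_letter (ι : X → G) (l : YT X G × Bool) :
    (if l.2 then genM ι l.1 else invM (genM ι l.1)) =
      ((({1, sval ι l}, {((if l.2 then 1 else sval ι l), l.1)}) : Graph X G), sval ι l) := by
  rcases l with ⟨y, b⟩
  cases b <;> simp [genM, invM, gmul, gammaY, sval, Set.image_pair, Set.pair_comm]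

theorem evalWordM_eq (ι : X → G) (w : List (YT X G × Bool)) :
    evalWordM ι w = ((wordGraph ι 1 w, evalSigned ι w) : Elt X G) := by
  induction w with
  | nil => rfl
  | cons l w ih =>
    simp only [evalWordM, wordGraph, evalSigned]
    rw [ih, eval_letter]
    simp only [mulM, ← wordGraph_gmul, one_mul, mul_one]

theorem wordGraph_props (ι : X → G) (w : List (YT X G × Bool)) (g : G) :
    (wordGraph ι g w).1.Finite ∧ (wordGraph ι g w).2.Finite ∧ g ∈ (wordGraph ι g w).1 ∧
    (∀ e ∈ (wordGraph ι g w).2,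
      e.1 ∈ (wordGraph ι g w).1 ∧ e.1 * iotaY ι e.2 ∈ (wordGraph ι g w).1) ∧
    ∀ v ∈ (wordGraph ι g w).1, Relation.EqvGen (edgeRel ι (wordGraph ι g w)) g v := by
  induction w generalizing g with
  | nil =>
    simp only [wordGraph]
    refine ⟨Set.finite_singleton _, Set.finite_empty, rfl, by simp, ?_⟩
    rintro v rfl
    exact .refl _
  | cons l w ih =>
    obtain ⟨h1, h2, h3, h4, h5⟩ := ih (g * sval ι l)
    have hstep : Relation.EqvGen (edgeRel ι (wordGraph ι g (l :: w))) g (g * sval ι l) := by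
      rcases l with ⟨y, b⟩
      cases b
      · exact .symm _ _ (.rel _ _ ⟨y, by simp [wordGraph, gunion], by simp [sval]⟩)
      · exact .rel _ _ ⟨y, by simp [wordGraph, gunion], by simp [sval]⟩
    refine ⟨?_, ?_, ?_, ?_, ?_⟩
    · exact (Set.toFinite _).union h1
    · exact (Set.toFinite _).union h2
    · simp [wordGraph, gunion]
    · rintro e (he | he)
      · rcases l with ⟨y, b⟩
        obtain rfl := Set.mem_singleton_iff.mp he
        cases b <;> simp [wordGraph, gunion, sval]
      · exact ⟨Or.inr (h4 e he).1, Or.inr (h4 e he).2⟩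
    · rintro v ((rfl | hv) | hv)
      · exact .refl _
      · obtain rfl := Set.mem_singleton_iff.mp hv
        exact hstep
      · refine .trans _ _ _ hstep (Relation.EqvGen.mono ?_ _ _ (h5 v hv))
        rintro a b ⟨y, hy, hb⟩
        exact ⟨y, Or.inr hy, hb⟩

/-- For every nonempty word `w` over `Y ∪ Y⁻¹`, the graph
`Γ_w` (spanned by the corresponding path from the origin) belongs to `𝒳_Y` and
the value of `w` in `M(G,Y)` equals `(Γ_w, g_n)`, where `g_n` is the value of
`w` in `G`; the value of the empty word is `(Γ_1, 1)`. -/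
theorem value_of_word_in_MGY {X G : Type*} [Nonempty X] [Group G] (ι : X → G)
    (hgen : Subgroup.closure (Set.range ι) = ⊤) :
    evalWordM ι ([] : List (YT X G × Bool)) = ((gammaOne, 1) : Elt X G) ∧
    ∀ w : List (YT X G × Bool), w ≠ [] →
      wordGraph ι 1 w ∈ XY ι ∧
      evalWordM ι w = ((wordGraph ι 1 w, evalSigned ι w) : Elt X G) := by
  refine ⟨rfl, fun w _ => ⟨?_, evalWordM_eq ι w⟩⟩
  obtain ⟨h1, h2, h3, h4, h5⟩ := wordGraph_props ι w 1
  exact ⟨⟨h1, h2, h3, h4⟩, h5⟩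

end FInvPaper
end
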